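/- Under the assumptions below, the covariance matrix of the gradient of the averaged sliced objective at the true parameter satisfies Var_{p_d, p_v}[∇_θ f(θ*; x, v_1^M)] = Σ_{i,j,p,q} [ (1 − 1/M) Σ_{ij} Σ_{pq} + (1/M) 𝔖_{ijpq} ] 𝔙_{ijpq}. (Lemma B.6 of the paper, general case.) -/

import Mathlib

open MeasureTheory

noncomputable section

/-- `∂ᵢ log p_m(x;θ)`, the `i`-th partial derivative in `x` of the log-density. -/
def dLx {D K : ℕ} (pm : EuclideanSpace ℝ (Fin K) → (Fin D → ℝ) → ℝ)
    (θ : EuclideanSpace ℝ (Fin K)) (x : Fin D → ℝ) (i : Fin D) : ℝ :=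
  fderiv ℝ (fun y => Real.log (pm θ y)) x (Pi.single i 1)

/-- `∂ᵢ∂ⱼ log p_m(x;θ)`, a second partial derivative in `x` of the log-density. -/
def d2Lx {D K : ℕ} (pm : EuclideanSpace ℝ (Fin K) → (Fin D → ℝ) → ℝ)
    (θ : EuclideanSpace ℝ (Fin K)) (x : Fin D → ℝ) (i j : Fin D) : ℝ :=
  fderiv ℝ (fun y => dLx pm θ y j) x (Pi.single i 1)

/-- `u_{ij}(x) = ∇_θ ∂ᵢ∂ⱼ l_m + ½ ∇_θ(∂ᵢ l_m ∂ⱼ l_m)` evaluated at `θ = θ*`. -/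
def uVec {D K : ℕ} (pm : EuclideanSpace ℝ (Fin K) → (Fin D → ℝ) → ℝ)
    (θstar : EuclideanSpace ℝ (Fin K)) (i j : Fin D) (x : Fin D → ℝ) :
    EuclideanSpace ℝ (Fin K) :=
  gradient (fun θ => d2Lx pm θ x i j) θstar
    + (1/2 : ℝ) • gradient (fun θ => dLx pm θ x i * dLx pm θ x j) θstar

/-- `f(θ; x, v_1^M) = (1/M) Σⱼ [vⱼᵀ ∇ₓ s_m(x;θ) vⱼ + ½ (vⱼᵀ s_m(x;θ))²]`. -/
def avgF {D K M : ℕ} (pm : EuclideanSpace ℝ (Fin K) → (Fin D → ℝ) → ℝ)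
    (θ : EuclideanSpace ℝ (Fin K)) (x : Fin D → ℝ) (vs : Fin M → Fin D → ℝ) : ℝ :=
  (1 / (M : ℝ)) * ∑ k : Fin M,
    ((∑ i, ∑ j, vs k i * vs k j * d2Lx pm θ x i j)
      + (1/2) * (∑ i, vs k i * dLx pm θ x i) ^ 2)

/-- `∇_θ f(θ*; x, v_1^M)`. -/
def gradF {D K M : ℕ} (pm : EuclideanSpace ℝ (Fin K) → (Fin D → ℝ) → ℝ)
    (θstar : EuclideanSpace ℝ (Fin K)) (x : Fin D → ℝ) (vs : Fin M → Fin D → ℝ) :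
    EuclideanSpace ℝ (Fin K) :=
  gradient (fun θ => avgF pm θ x vs) θstar

/-!
The objective is a quadratic form in the projections, so its gradient is
`∑ i j, (𝔼 k, vₖᵢ vₖⱼ) • u_{ij}(x)`: a sum of products of a function of `v_1^M` with a function of
`x`. Since `x` is independent of the projections, the second moment of the gradient splits into
the second moments `𝔙_{ijpq}` of the `u_{ij}` and those of the sample means `𝔼 k, vₖᵢ vₖⱼ`. In the
latter, a pair of distinct indices `k ≠ l` contributes `Σ_{ij} Σ_{pq}` by independence, whereas a
pair `k = l`, which is a fraction `1/M` of all pairs, contributes `𝔖_{ijpq}`. The gradient has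
mean zero, so its second moment is its covariance.
-/

section Expect

open scoped BigOperators

variable {ι α 𝕜 : Type*} [Fintype ι] [MeasurableSpace α] [RCLike 𝕜] {μ : Measure α} {f : ι → α → 𝕜}

theorem expect_expect_ite_eq {R : Type*} [Field R] [CharZero R] [Nonempty ι] [DecidableEq ι]
    (s t : R) :
    𝔼 k : ι, 𝔼 l : ι, (if k = l then s else t)
      = (1 - 1 / (Fintype.card ι : R)) * t + 1 / (Fintype.card ι : R) * s := by
  have ite_eq_add (k l : ι) : (if k = l then s else t) = t + if k = l then s - t else 0 := by
    split_ifs <;> ring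
  have card_ne_zero : (Fintype.card ι : R) ≠ 0 := Nat.cast_ne_zero.mpr Fintype.card_ne_zero
  simp only [ite_eq_add, Fintype.expect_eq_sum_div_card, Finset.sum_add_distrib, Finset.sum_const,
    Finset.sum_ite_eq, Finset.mem_univ, if_true, Finset.card_univ, nsmul_eq_mul]
  field_simp
  ring

theorem integrable_expect (hf : ∀ k, Integrable (f k) μ) :
    Integrable (fun x => 𝔼 k, f k x) μ := by
  simp only [Fintype.expect_eq_sum_div_card]
  exact (integrable_finsetSum _ fun k _ => hf k).div_const _

theorem integral_expect (hf : ∀ k, Integrable (f k) μ) :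
    ∫ x, 𝔼 k, f k x ∂μ = 𝔼 k, ∫ x, f k x ∂μ := by
  simp only [Fintype.expect_eq_sum_div_card, integral_div]
  rw [integral_finsetSum _ fun k _ => hf k]

end Expect

section SampleMean

open scoped BigOperators

variable {ι α 𝕜 : Type*} [Fintype ι] [MeasurableSpace α] [RCLike 𝕜]
  {μ : Measure α} [IsProbabilityMeasure μ] {f g : α → 𝕜}

theorem memLp_comp_eval {p : ENNReal} (hf : MemLp f p μ) (k : ι) :
    MemLp (fun vs : ι → α => f (vs k)) p (Measure.pi fun _ => μ) :=
  hf.comp_measurePreserving (measurePreserving_eval (fun _ => μ) k)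

theorem memLp_expect_comp_eval {p : ENNReal} (hf : MemLp f p μ) :
    MemLp (fun vs : ι → α => 𝔼 k, f (vs k)) p (Measure.pi fun _ => μ) := by
  simp only [Fintype.expect_eq_sum_div_card, div_eq_inv_mul]
  exact (memLp_finsetSum _ fun k _ => memLp_comp_eval hf k).const_mul _

theorem integral_comp_eval_mul_comp_eval_self (hf : AEStronglyMeasurable f μ)
    (hg : AEStronglyMeasurable g μ) (k : ι) :
    ∫ vs : ι → α, f (vs k) * g (vs k) ∂(Measure.pi fun _ => μ) = ∫ v, f v * g v ∂μ :=
  integral_comp_eval (μ := fun _ => μ) (f := fun v => f v * g v) (hf.mul hg)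

theorem integral_comp_eval_mul_comp_eval_of_ne (hf : AEStronglyMeasurable f μ)
    (hg : AEStronglyMeasurable g μ) {k l : ι} (hkl : k ≠ l) :
    ∫ vs : ι → α, f (vs k) * g (vs l) ∂(Measure.pi fun _ => μ)
      = (∫ v, f v ∂μ) * ∫ v, g v ∂μ := by
  have indep : ProbabilityTheory.IndepFun (fun vs : ι → α => vs k) (fun vs => vs l)
      (Measure.pi fun _ => μ) :=
    (ProbabilityTheory.iIndepFun_pi (X := fun _ v => v) fun _ => aemeasurable_id).indepFun hkl
  have map_eval (m : ι) : (Measure.pi fun _ => μ).map (fun vs : ι → α => vs m) = μ :=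
    (measurePreserving_eval (fun _ => μ) m).map_eq
  rw [indep.integral_fun_comp_mul_comp (measurable_pi_apply k).aemeasurable
      (measurable_pi_apply l).aemeasurable (by rwa [map_eval]) (by rwa [map_eval]),
    integral_comp_eval (μ := fun _ => μ) hf, integral_comp_eval (μ := fun _ => μ) hg]

theorem integral_expect_mul_expect [Nonempty ι] (hf : MemLp f 2 μ) (hg : MemLp g 2 μ) :
    ∫ vs : ι → α, (𝔼 k, f (vs k)) * (𝔼 l, g (vs l)) ∂(Measure.pi fun _ => μ)
      = (1 - 1 / (Fintype.card ι : 𝕜)) * ((∫ v, f v ∂μ) * ∫ v, g v ∂μ)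
        + 1 / (Fintype.card ι : 𝕜) * ∫ v, f v * g v ∂μ := by
  classical
  have integrable (k l : ι) :
      Integrable (fun vs : ι → α => f (vs k) * g (vs l)) (Measure.pi fun _ => μ) :=
    (memLp_comp_eval hf k).integrable_mul (memLp_comp_eval hg l)
  have moment (k l : ι) : ∫ vs : ι → α, f (vs k) * g (vs l) ∂(Measure.pi fun _ => μ)
      = if k = l then ∫ v, f v * g v ∂μ else (∫ v, f v ∂μ) * ∫ v, g v ∂μ := by
    split_ifs with hkl
    · exact hkl ▸ integral_comp_eval_mul_comp_eval_self hf.1 hg.1 k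
    · exact integral_comp_eval_mul_comp_eval_of_ne hf.1 hg.1 hkl
  calc ∫ vs : ι → α, (𝔼 k, f (vs k)) * (𝔼 l, g (vs l)) ∂(Measure.pi fun _ => μ)
      = 𝔼 k, 𝔼 l, ∫ vs : ι → α, f (vs k) * g (vs l) ∂(Measure.pi fun _ => μ) := by
        simp only [Finset.expect_mul_expect]
        rw [integral_expect fun k => integrable_expect fun l => integrable k l]
        simp only [integral_expect fun l => integrable _ l]
    _ = _ := by simp only [moment, expect_expect_ite_eq]

end SampleMean

section SeparatedSum

variable {κ α β 𝕜 : Type*} [Fintype κ] [MeasurableSpace α] [MeasurableSpace β] [RCLike 𝕜]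
  {μ : Measure α} {ν : Measure β} [SFinite μ] [SFinite ν] {f g : κ → α → 𝕜} {s t : κ → β → 𝕜}

theorem integral_prod_sum_mul_sum
    (hfg : ∀ r r', Integrable (fun x => f r x * g r' x) μ)
    (hst : ∀ r r', Integrable (fun y => s r y * t r' y) ν) :
    ∫ z, (∑ r, s r z.2 * f r z.1) * (∑ r, t r z.2 * g r z.1) ∂(μ.prod ν)
      = ∑ r, ∑ r', (∫ y, s r y * t r' y ∂ν) * ∫ x, f r x * g r' x ∂μ := by
  have separate (r r' : κ) (z : α × β) : s r z.2 * f r z.1 * (t r' z.2 * g r' z.1)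
      = f r z.1 * g r' z.1 * (s r z.2 * t r' z.2) := by ring
  have integrable (r r' : κ) := (hfg r r').mul_prod (hst r r')
  simp only [Finset.sum_mul_sum, separate]
  rw [integral_finsetSum _ fun r _ => integrable_finsetSum _ fun r' _ => integrable r r']
  refine Finset.sum_congr rfl fun r _ => ?_
  rw [integral_finsetSum _ fun r' _ => integrable r r']
  refine Finset.sum_congr rfl fun r' _ => ?_
  rw [integral_prod_mul (fun x => f r x * g r' x) (fun y => s r y * t r' y), mul_comm]

end SeparatedSum

theorem memLp_two_of_integrable_sum_sq {κ α : Type*} [Fintype κ] [MeasurableSpace α]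
    {μ : Measure α} {f : κ → α → ℝ} (hf : ∀ r, AEStronglyMeasurable (f r) μ)
    (hsum : Integrable (fun x => ∑ r, f r x ^ 2) μ) (r : κ) : MemLp (f r) 2 μ := by
  rw [memLp_two_iff_integrable_sq (hf r)]
  refine hsum.mono' ((hf r).pow 2) (.of_forall fun x => ?_)
  rw [Real.norm_of_nonneg (sq_nonneg _)]
  exact Finset.single_le_sum (f := fun r => f r x ^ 2) (fun _ _ => sq_nonneg _) (Finset.mem_univ r)

theorem memLp_two_apply_mul_apply {κ : Type*} [Fintype κ] {μ : Measure (κ → ℝ)}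
    (hμ : Integrable (fun v => ∑ i, ∑ j, (v i * v j) ^ 2) μ) (i j : κ) :
    MemLp (fun v : κ → ℝ => v i * v j) 2 μ :=
  memLp_two_of_integrable_sum_sq (f := fun (r : κ × κ) (v : κ → ℝ) => v r.1 * v r.2)
    (fun _ => by fun_prop) (by simpa only [Fintype.sum_prod_type] using hμ) (i, j)

theorem contDiff_fderiv_apply_snd {𝕜 E F G : Type*} [NontriviallyNormedField 𝕜]
    [NormedAddCommGroup E] [NormedSpace 𝕜 E] [NormedAddCommGroup F] [NormedSpace 𝕜 F]
    [NormedAddCommGroup G] [NormedSpace 𝕜 G] {m n : WithTop ℕ∞} {f : E → F → G}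
    (hf : ContDiff 𝕜 n fun p : E × F => f p.1 p.2) (hmn : m + 1 ≤ n) (w : F) :
    ContDiff 𝕜 m fun p : E × F => fderiv 𝕜 (f p.1) p.2 w :=
  ContDiff.fderiv_apply (f := fun p : E × F => f p.1)
    (hf.comp ((contDiff_fst.comp contDiff_fst).prodMk contDiff_snd)) contDiff_snd contDiff_const hmn

section Gradient

variable {F : Type*} [NormedAddCommGroup F] [InnerProductSpace ℝ F] [CompleteSpace F]
  {f g : F → ℝ} {f' g' x : F}

theorem hasGradientAt_add (hf : HasGradientAt f f' x) (hg : HasGradientAt g g' x) :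
    HasGradientAt (fun y => f y + g y) (f' + g') x := by
  rw [hasGradientAt_iff_hasFDerivAt, map_add]
  exact hf.hasFDerivAt.add hg.hasFDerivAt

theorem hasGradientAt_const_mul (c : ℝ) (hf : HasGradientAt f f' x) :
    HasGradientAt (fun y => c * f y) (c • f') x := by
  rw [hasGradientAt_iff_hasFDerivAt, map_smul]
  exact hf.hasFDerivAt.const_mul c

theorem hasGradientAt_sum {κ : Type*} {s : Finset κ} {f : κ → F → ℝ} {f' : κ → F}
    (hf : ∀ r ∈ s, HasGradientAt (f r) (f' r) x) :
    HasGradientAt (fun y => ∑ r ∈ s, f r y) (∑ r ∈ s, f' r) x := by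
  rw [hasGradientAt_iff_hasFDerivAt, map_sum]
  exact HasFDerivAt.fun_sum fun r hr => (hf r hr).hasFDerivAt

end Gradient

section SlicedObjective

open scoped BigOperators

variable {D K M : ℕ} {pm : EuclideanSpace ℝ (Fin K) → (Fin D → ℝ) → ℝ}
  {θ₀ : EuclideanSpace ℝ (Fin K)} {x : Fin D → ℝ}

theorem contDiff_dLx {m n : WithTop ℕ∞}
    (hpm : ContDiff ℝ n
      fun p : EuclideanSpace ℝ (Fin K) × (Fin D → ℝ) => Real.log (pm p.1 p.2))
    (hmn : m + 1 ≤ n) (i : Fin D) :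
    ContDiff ℝ m fun p : EuclideanSpace ℝ (Fin K) × (Fin D → ℝ) => dLx pm p.1 p.2 i :=
  contDiff_fderiv_apply_snd (f := fun θ y => Real.log (pm θ y)) hpm hmn (Pi.single i 1)

theorem contDiff_d2Lx {m n : WithTop ℕ∞}
    (hpm : ContDiff ℝ n
      fun p : EuclideanSpace ℝ (Fin K) × (Fin D → ℝ) => Real.log (pm p.1 p.2))
    (hmn : m + 1 + 1 ≤ n) (i j : Fin D) :
    ContDiff ℝ m fun p : EuclideanSpace ℝ (Fin K) × (Fin D → ℝ) => d2Lx pm p.1 p.2 i j :=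
  contDiff_fderiv_apply_snd (f := fun θ y => dLx pm θ y j) (contDiff_dLx hpm hmn j) le_rfl
    (Pi.single i 1)

theorem differentiable_dLx {n : WithTop ℕ∞}
    (hpm : ContDiff ℝ n
      fun p : EuclideanSpace ℝ (Fin K) × (Fin D → ℝ) => Real.log (pm p.1 p.2))
    (hn : 2 ≤ n) (x : Fin D → ℝ) (i : Fin D) : Differentiable ℝ fun θ => dLx pm θ x i :=
  ((contDiff_dLx hpm (one_add_one_eq_two.trans_le hn) i).differentiable one_ne_zero).comp
    (differentiable_id.prodMk (differentiable_const x))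

theorem differentiable_d2Lx {n : WithTop ℕ∞}
    (hpm : ContDiff ℝ n
      fun p : EuclideanSpace ℝ (Fin K) × (Fin D → ℝ) => Real.log (pm p.1 p.2))
    (hn : 3 ≤ n) (x : Fin D → ℝ) (i j : Fin D) : Differentiable ℝ fun θ => d2Lx pm θ x i j :=
  ((contDiff_d2Lx hpm (le_of_eq_of_le (by norm_num) hn) i j).differentiable one_ne_zero).comp
    (differentiable_id.prodMk (differentiable_const x))

/-- The matrix `∂ᵢ∂ⱼ l_m + ½ ∂ᵢ l_m ∂ⱼ l_m` of the quadratic form `v ↦ f(θ; x, v)`; its gradient in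
`θ` is `u_{ij}`. -/
def slicedForm (pm : EuclideanSpace ℝ (Fin K) → (Fin D → ℝ) → ℝ)
    (θ : EuclideanSpace ℝ (Fin K)) (x : Fin D → ℝ) (i j : Fin D) : ℝ :=
  d2Lx pm θ x i j + 1 / 2 * (dLx pm θ x i * dLx pm θ x j)

theorem hasGradientAt_slicedForm {i j : Fin D}
    (hi : DifferentiableAt ℝ (fun θ => dLx pm θ x i) θ₀)
    (hj : DifferentiableAt ℝ (fun θ => dLx pm θ x j) θ₀)
    (hij : DifferentiableAt ℝ (fun θ => d2Lx pm θ x i j) θ₀) :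
    HasGradientAt (fun θ => slicedForm pm θ x i j) (uVec pm θ₀ i j x) θ₀ :=
  hasGradientAt_add hij.hasGradientAt (hasGradientAt_const_mul _ (hi.mul hj).hasGradientAt)

theorem sum_mul_d2Lx_add_sq_eq_sum_slicedForm (θ : EuclideanSpace ℝ (Fin K)) (v : Fin D → ℝ) :
    (∑ i, ∑ j, v i * v j * d2Lx pm θ x i j) + (1 / 2) * (∑ i, v i * dLx pm θ x i) ^ 2
      = ∑ r : Fin D × Fin D, v r.1 * v r.2 * slicedForm pm θ x r.1 r.2 := by
  rw [sq, Finset.sum_mul_sum, Fintype.sum_prod_type]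
  simp only [Finset.mul_sum, ← Finset.sum_add_distrib, slicedForm]
  refine Finset.sum_congr rfl fun i _ => Finset.sum_congr rfl fun j _ => ?_
  ring

theorem avgF_eq_sum_expect_mul_slicedForm (θ : EuclideanSpace ℝ (Fin K))
    (vs : Fin M → Fin D → ℝ) :
    avgF pm θ x vs
      = ∑ r : Fin D × Fin D, (𝔼 k, vs k r.1 * vs k r.2) * slicedForm pm θ x r.1 r.2 := by
  simp only [avgF, sum_mul_d2Lx_add_sq_eq_sum_slicedForm, Finset.expect_mul]
  rw [← Finset.expect_sum_comm, Fintype.expect_eq_sum_div_card, Fintype.card_fin,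
    one_div_mul_eq_div]

theorem gradF_eq_sum_expect_smul_uVec
    (hd : ∀ i, DifferentiableAt ℝ (fun θ => dLx pm θ x i) θ₀)
    (hd2 : ∀ i j, DifferentiableAt ℝ (fun θ => d2Lx pm θ x i j) θ₀) (vs : Fin M → Fin D → ℝ) :
    gradF pm θ₀ x vs
      = ∑ r : Fin D × Fin D, (𝔼 k, vs k r.1 * vs k r.2) • uVec pm θ₀ r.1 r.2 x := by
  simp only [gradF, avgF_eq_sum_expect_mul_slicedForm]
  exact (hasGradientAt_sum fun r _ => hasGradientAt_const_mul _
    (hasGradientAt_slicedForm (hd r.1) (hd r.2) (hd2 r.1 r.2))).gradient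

/-- Stated for the uncentred second moment, which is the variance when `∇_θ f` has mean zero. -/
theorem variance_of_sliced_gradient_general (hM : 1 ≤ M) {μd μv : Measure (Fin D → ℝ)}
    [SFinite μd] [IsProbabilityMeasure μv]
    (hd : ∀ x i, DifferentiableAt ℝ (fun θ => dLx pm θ x i) θ₀)
    (hd2 : ∀ x i j, DifferentiableAt ℝ (fun θ => d2Lx pm θ x i j) θ₀)
    (hv : ∀ i j, MemLp (fun v : Fin D → ℝ => v i * v j) 2 μv) {a b : Fin K}
    (huu : ∀ i j p q, Integrable (fun x => uVec pm θ₀ i j x a * uVec pm θ₀ p q x b) μd) :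
    ∫ z : (Fin D → ℝ) × (Fin M → Fin D → ℝ), gradF pm θ₀ z.1 z.2 a * gradF pm θ₀ z.1 z.2 b
        ∂(μd.prod (Measure.pi fun _ : Fin M => μv))
      = ∑ i, ∑ j, ∑ p, ∑ q,
          ((1 - 1 / (M : ℝ)) * ((∫ v, v i * v j ∂μv) * (∫ v, v p * v q ∂μv))
            + (1 / (M : ℝ)) * ∫ v, v i * v j * v p * v q ∂μv)
          * ∫ x, uVec pm θ₀ i j x a * uVec pm θ₀ p q x b ∂μd := by
  have : Nonempty (Fin M) := ⟨⟨0, hM⟩⟩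
  have gradF_apply (c : Fin K) (z : (Fin D → ℝ) × (Fin M → Fin D → ℝ)) : gradF pm θ₀ z.1 z.2 c
      = ∑ r : Fin D × Fin D, (𝔼 k, z.2 k r.1 * z.2 k r.2) * uVec pm θ₀ r.1 r.2 z.1 c := by
    simp [gradF_eq_sum_expect_smul_uVec (hd z.1) (hd2 z.1)]
  have integrable_means (r r' : Fin D × Fin D) : Integrable (fun vs : Fin M → Fin D → ℝ =>
      (𝔼 k, vs k r.1 * vs k r.2) * 𝔼 l, vs l r'.1 * vs l r'.2) (Measure.pi fun _ => μv) :=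
    (memLp_expect_comp_eval (hv r.1 r.2)).integrable_mul (memLp_expect_comp_eval (hv r'.1 r'.2))
  simp only [gradF_apply]
  rw [integral_prod_sum_mul_sum (fun r r' => huu r.1 r.2 r'.1 r'.2) integrable_means]
  simp only [integral_expect_mul_expect (hv _ _) (hv _ _), Fintype.sum_prod_type,
    Fintype.card_fin, mul_assoc]

end SlicedObjective

/-- **Lemma B.6 of the paper (general case).** The covariance matrix of
`∇_θ f(θ*; x, v_1^M)` equals
`Σ_{i,j,p,q} [(1 − 1/M) Σ_{ij} Σ_{pq} + (1/M) 𝔖_{ijpq}] 𝔙_{ijpq}`. -/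
theorem variance_of_sliced_gradient
    (D K M : ℕ) (hD : 1 ≤ D) (hM : 1 ≤ M)
    (pd : (Fin D → ℝ) → ℝ)
    (pm : EuclideanSpace ℝ (Fin K) → (Fin D → ℝ) → ℝ)
    (θstar : EuclideanSpace ℝ (Fin K))
    (μd μv : Measure (Fin D → ℝ)) [IsProbabilityMeasure μd] [IsProbabilityMeasure μv]
    -- data density: positive, differentiable; μd is the data distribution
    (hpd_pos : ∀ x, 0 < pd x) (hpd_diff : Differentiable ℝ pd)
    (hμd : μd = volume.withDensity (fun x => ENNReal.ofReal (pd x)))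
    -- model densities: positive, with all relevant derivatives existing
    (hpm_pos : ∀ θ x, 0 < pm θ x)
    (hsmooth : ContDiff ℝ (⊤ : ℕ∞)
      (fun p : EuclideanSpace ℝ (Fin K) × (Fin D → ℝ) => Real.log (pm p.1 p.2)))
    -- well-specified: p_d = p_m(·; θ*)
    (hws : pd = pm θstar)
    -- moments of the projection distribution
    (hv2 : Integrable (fun v => ∑ i, (v i) ^ 2) μv)
    (hv4 : Integrable (fun v => ∑ i, ∑ j, (v i * v j) ^ 2) μv)
    -- all expectations below are finite
    (hg_int : ∀ a : Fin K,
      Integrable (fun z : (Fin D → ℝ) × (Fin M → Fin D → ℝ) => gradF pm θstar z.1 z.2 a)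
        (μd.prod (Measure.pi fun _ : Fin M => μv)))
    (hgg_int : ∀ a b : Fin K,
      Integrable (fun z : (Fin D → ℝ) × (Fin M → Fin D → ℝ) =>
          gradF pm θstar z.1 z.2 a * gradF pm θstar z.1 z.2 b)
        (μd.prod (Measure.pi fun _ : Fin M => μv)))
    (huu_int : ∀ (i j p q : Fin D) (a b : Fin K),
      Integrable (fun x => uVec pm θstar i j x a * uVec pm θstar p q x b) μd)
    -- the assumptions of Theorem 1 hold, so the gradient has zero mean at θ*
    (hmean : ∀ a : Fin K,
      ∫ z : (Fin D → ℝ) × (Fin M → Fin D → ℝ), gradF pm θstar z.1 z.2 a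
        ∂(μd.prod (Measure.pi fun _ : Fin M => μv)) = 0) :
    ∀ a b : Fin K,
      (∫ z : (Fin D → ℝ) × (Fin M → Fin D → ℝ),
          gradF pm θstar z.1 z.2 a * gradF pm θstar z.1 z.2 b
          ∂(μd.prod (Measure.pi fun _ : Fin M => μv)))
        - (∫ z : (Fin D → ℝ) × (Fin M → Fin D → ℝ), gradF pm θstar z.1 z.2 a
            ∂(μd.prod (Measure.pi fun _ : Fin M => μv)))
          * (∫ z : (Fin D → ℝ) × (Fin M → Fin D → ℝ), gradF pm θstar z.1 z.2 b
              ∂(μd.prod (Measure.pi fun _ : Fin M => μv)))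
      = ∑ i, ∑ j, ∑ p, ∑ q,
          ((1 - 1 / (M : ℝ)) * ((∫ v, v i * v j ∂μv) * (∫ v, v p * v q ∂μv))
            + (1 / (M : ℝ)) * ∫ v, v i * v j * v p * v q ∂μv)
          * ∫ x, uVec pm θstar i j x a * uVec pm θstar p q x b ∂μd := by
  intro a b
  rw [hmean a, zero_mul, sub_zero]
  exact variance_of_sliced_gradient_general hM
    (fun x i => differentiable_dLx hsmooth ENat.LEInfty.out x i θstar)
    (fun x i j => differentiable_d2Lx hsmooth ENat.LEInfty.out x i j θstar)
    (memLp_two_apply_mul_apply hv4) (huu_int · · · · a b)
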